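/- Let h ≥ 1 and let m_1 ≥ m_2 ≥ … ≥ m_h ≥ 1 be positive integers. The number of pyramids of height h with multivolume (m_1, …, m_h) equals Σ over all pairs (a, b) of weakly decreasing tuples a, b ∈ (ℕ+)^h with a_i · b_i = m_i for every i, of the product ∏_{i=1}^{h−1} (a_i − a_{i+1} + 1)(b_i − b_{i+1} + 1) (an empty product, equal to 1, when h = 1). -/

import Mathlib

/-!
A pyramid is determined by its plateaus `[x i, x i + a i) × [y i, y i + b i)`, `i < h`. The ground
plateau is a rectangle in the positive quadrant containing the origin, so `x 0 = y 0 = 0`, and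
nestedness of consecutive plateaus splits into nestedness of the intervals in each of the two
coordinates. Hence pyramids correspond bijectively to quadruples `(a, b, x, y)` where `x` and `y`
are the left endpoints of nested chains of intervals of lengths `a` and `b`
(`pyramidOfData_bijective`). For weakly decreasing `a`, such a chain is given by its successive
shifts `x (i + 1) - x i`, chosen independently in `{0, …, a i - a (i + 1)}`, so that there are
`pyrWeight h a` of them (`card_chains`). Summing over the pairs `(a, b)` of side-length tuples
gives the formula.
-/

/-- The `a`-th horizontal slice of a finite set of cells in `ℕ × ℤ × ℤ`. -/
def polySlice (P : Finset (ℕ × ℤ × ℤ)) (a : ℕ) : Finset (ℤ × ℤ) :=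
  (P.filter fun q => q.1 = a).image fun q => q.2

/-- A plateau: the product of two nonempty finite integer intervals. -/
def IsPlateau (S : Finset (ℤ × ℤ)) : Prop :=
  ∃ a b c d : ℤ, a ≤ b ∧ c ≤ d ∧ S = Finset.Icc a b ×ˢ Finset.Icc c d

/-- A pyramid of height `h`. -/
def IsPyramid (h : ℕ) (P : Finset (ℕ × ℤ × ℤ)) : Prop :=
  (∀ a : ℕ, (polySlice P a).Nonempty ↔ a < h) ∧
  (∀ a : ℕ, a < h → IsPlateau (polySlice P a)) ∧
  (∀ (a : ℕ) (b c : ℤ), (a + 1, b, c) ∈ P → (a, b, c) ∈ P) ∧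
  (∀ b c : ℤ, ((0 : ℕ), b, c) ∈ P → 0 ≤ b ∧ 0 ≤ c) ∧
  ((0 : ℕ), (0 : ℤ), (0 : ℤ)) ∈ P

/-- An espalier of height `h`: a pyramid all of whose plateaus contain `(0,0)`. -/
def IsEspalier (h : ℕ) (P : Finset (ℕ × ℤ × ℤ)) : Prop :=
  IsPyramid h P ∧ ∀ a : ℕ, a < h → (a, (0 : ℤ), (0 : ℤ)) ∈ P

/-- The weight `(n_1 - n_2 + 1) ⋯ (n_{h-1} - n_h + 1)` of a tuple of positive integers
(an empty product, equal to `1`, when `h = 1`). -/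
def pyrWeight (h : ℕ) (n : Fin h → ℕ+) : ℕ :=
  ∏ i : Fin h,
    if hi : (i : ℕ) + 1 < h then (n i : ℕ) - (n ⟨(i : ℕ) + 1, hi⟩ : ℕ) + 1 else 1

/-! ### Chains of nested intervals -/

/-- `IntervalChain h a x`: the integer intervals `[x i, x i + a i)` for `i < h` form a decreasing
chain, and the first of them starts at `0`. -/
def IntervalChain (h : ℕ) (a : Fin h → ℕ+) (x : Fin h → ℤ) : Prop :=
  (∀ h0 : 0 < h, x ⟨0, h0⟩ = 0) ∧
  ∀ (k : ℕ) (hk : k + 1 < h),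
    x ⟨k, by omega⟩ ≤ x ⟨k + 1, hk⟩ ∧
    x ⟨k + 1, hk⟩ + (a ⟨k + 1, hk⟩ : ℕ) ≤ x ⟨k, by omega⟩ + (a ⟨k, by omega⟩ : ℕ)

/-- The number of admissible values of the `i`-th shift; the last shift is a dummy with one
value. -/
def shiftCount (h : ℕ) (a : Fin h → ℕ+) (i : Fin h) : ℕ :=
  if hi : (i : ℕ) + 1 < h then (a i : ℕ) - (a ⟨(i : ℕ) + 1, hi⟩ : ℕ) + 1 else 1

/-- The left endpoints obtained by adding up the shifts. -/
def endpointsOfShifts (h : ℕ) (a : Fin h → ℕ+) (d : ∀ i : Fin h, Fin (shiftCount h a i))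
    (i : Fin h) : ℤ :=
  ∑ k ∈ Finset.range (i : ℕ), if hk : k < h then ((d ⟨k, hk⟩ : ℕ) : ℤ) else 0

lemma endpointsOfShifts_succ (h : ℕ) (a : Fin h → ℕ+) (d : ∀ i : Fin h, Fin (shiftCount h a i))
    (k : ℕ) (hk : k + 1 < h) :
    endpointsOfShifts h a d ⟨k + 1, hk⟩ =
      endpointsOfShifts h a d ⟨k, by omega⟩ + ((d ⟨k, by omega⟩ : ℕ) : ℤ) := by
  have hk' : k < h := by omega
  simp [endpointsOfShifts, Finset.sum_range_succ, hk']

lemma intervalChain_endpointsOfShifts (h : ℕ) (a : Fin h → ℕ+) (ha : Antitone a)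
    (d : ∀ i : Fin h, Fin (shiftCount h a i)) :
    IntervalChain h a (endpointsOfShifts h a d) := by
  refine ⟨fun h0 => by simp [endpointsOfShifts], fun k hk => ?_⟩
  have h1 := (d ⟨k, by omega⟩).isLt
  have h2 : (a ⟨k + 1, hk⟩ : ℕ) ≤ a ⟨k, by omega⟩ :=
    PNat.coe_le_coe _ _ |>.2 (ha (Fin.mk_le_mk.2 (by omega)))
  simp only [shiftCount, hk, dif_pos] at h1
  rw [endpointsOfShifts_succ]
  omega

lemma endpointsOfShifts_bijective (h : ℕ) (a : Fin h → ℕ+) (ha : Antitone a) :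
    Function.Bijective (fun d : ∀ i : Fin h, Fin (shiftCount h a i) =>
      (⟨endpointsOfShifts h a d, intervalChain_endpointsOfShifts h a ha d⟩ :
        {x // IntervalChain h a x})) := by
  constructor
  · intro d e hde
    have hde' : endpointsOfShifts h a d = endpointsOfShifts h a e := congrArg Subtype.val hde
    funext i
    ext
    by_cases hi : (i : ℕ) + 1 < h
    · have h1 := endpointsOfShifts_succ h a d i hi
      have h2 := endpointsOfShifts_succ h a e i hi
      rw [hde'] at h1
      simp only [Fin.eta] at h1 h2
      omega
    · have h1 := (d i).isLt
      have h2 := (e i).isLt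
      simp only [shiftCount, hi, dif_neg, not_false_eq_true] at h1 h2
      omega
  · rintro ⟨x, hx0, hx⟩
    refine ⟨fun i => ⟨if hi : (i : ℕ) + 1 < h then (x ⟨(i : ℕ) + 1, hi⟩ - x i).toNat else 0, ?_⟩, ?_⟩
    · by_cases hi : (i : ℕ) + 1 < h
      · have := hx i hi
        simp only [shiftCount, hi, dif_pos, Fin.eta] at this ⊢
        omega
      · simp [shiftCount, hi]
    · refine Subtype.ext (funext fun i => ?_)
      obtain ⟨k, hk⟩ := i
      induction k with
      | zero => simp [endpointsOfShifts, hx0 hk]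
      | succ k ih =>
        have h1 := ih (by omega)
        have h2 := hx k hk
        simp only at h1 ⊢
        rw [endpointsOfShifts_succ, h1]
        simp only [hk, dif_pos]
        omega

lemma finite_chains (h : ℕ) (a : Fin h → ℕ+) (ha : Antitone a) :
    Finite {x // IntervalChain h a x} :=
  Finite.of_surjective _ (endpointsOfShifts_bijective h a ha).2

lemma card_chains (h : ℕ) (a : Fin h → ℕ+) (ha : Antitone a) :
    Nat.card {x // IntervalChain h a x} = pyrWeight h a := by
  rw [← Nat.card_congr (Equiv.ofBijective _ (endpointsOfShifts_bijective h a ha)), Nat.card_pi]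
  simp [pyrWeight, shiftCount]

lemma IntervalChain.antitone {h : ℕ} {a : Fin h → ℕ+} {x : Fin h → ℤ}
    (hx : IntervalChain h a x) : Antitone a := by
  rintro ⟨i, hi⟩ ⟨j, hj⟩ hij
  replace hij : i ≤ j := hij
  induction j, hij using Nat.le_induction with
  | base => exact le_rfl
  | succ j _ ih =>
    refine le_trans ?_ (ih (by omega))
    have := hx.2 j hj
    rw [← PNat.coe_le_coe]
    omega

/-! ### Pyramids and their coordinates -/

lemma mem_polySlice {P : Finset (ℕ × ℤ × ℤ)} {k : ℕ} {q : ℤ × ℤ} :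
    q ∈ polySlice P k ↔ (k, q) ∈ P := by
  simp [polySlice]

/-- The plateau `[x, x + a) × [y, y + b)`. -/
noncomputable def plateauOf (a b : ℕ+) (x y : ℤ) : Finset (ℤ × ℤ) :=
  Finset.Icc x (x + (a : ℕ) - 1) ×ˢ Finset.Icc y (y + (b : ℕ) - 1)

lemma mem_plateauOf {a b : ℕ+} {x y : ℤ} {q : ℤ × ℤ} :
    q ∈ plateauOf a b x y ↔
      (x ≤ q.1 ∧ q.1 < x + (a : ℕ)) ∧ (y ≤ q.2 ∧ q.2 < y + (b : ℕ)) := by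
  simp [plateauOf]

lemma card_plateauOf (a b : ℕ+) (x y : ℤ) : (plateauOf a b x y).card = (a : ℕ) * b := by
  simp [plateauOf, Finset.card_product]

lemma plateauOf_subset {a b a' b' : ℕ+} {x y x' y' : ℤ} :
    plateauOf a b x y ⊆ plateauOf a' b' x' y' ↔
      (x' ≤ x ∧ x + (a : ℕ) ≤ x' + (a' : ℕ)) ∧ (y' ≤ y ∧ y + (b : ℕ) ≤ y' + (b' : ℕ)) := by
  have ha := a.pos
  have hb := b.pos
  constructor
  · intro hs
    -- It suffices to test the two opposite corners of the smaller rectangle.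
    have h1 := @hs (x, y) (by rw [mem_plateauOf]; simp only; omega)
    have h2 := @hs (x + (a : ℕ) - 1, y + (b : ℕ) - 1) (by rw [mem_plateauOf]; simp only; omega)
    rw [mem_plateauOf] at h1 h2
    simp only at h1 h2
    omega
  · intro hs q hq
    rw [mem_plateauOf] at hq ⊢
    omega

lemma plateauOf_inj {a b a' b' : ℕ+} {x y x' y' : ℤ}
    (he : plateauOf a b x y = plateauOf a' b' x' y') : a = a' ∧ b = b' ∧ x = x' ∧ y = y' := by
  have h1 := plateauOf_subset.1 he.subset
  have h2 := plateauOf_subset.1 he.symm.subset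
  rw [← PNat.coe_inj, ← PNat.coe_inj]
  omega

lemma IsPlateau.exists_eq {S : Finset (ℤ × ℤ)} (hS : IsPlateau S) :
    ∃ (a b : ℕ+) (x y : ℤ), S = plateauOf a b x y := by
  obtain ⟨p, q, r, s, hpq, hrs, rfl⟩ := hS
  refine ⟨⟨(q - p + 1).toNat, by omega⟩, ⟨(s - r + 1).toNat, by omega⟩, p, r, ?_⟩
  have h1 : p + ((q - p + 1).toNat : ℤ) - 1 = q := by omega
  have h2 : r + ((s - r + 1).toNat : ℤ) - 1 = s := by omega
  simp only [plateauOf, PNat.mk_coe, h1, h2]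

lemma isPlateau_plateauOf (a b : ℕ+) (x y : ℤ) : IsPlateau (plateauOf a b x y) := by
  have ha := a.pos
  have hb := b.pos
  exact ⟨_, _, _, _, by omega, by omega, rfl⟩

/-- The set of cells whose `i`-th slice is the plateau `[x i, x i + a i) × [y i, y i + b i)`. -/
noncomputable def stack (h : ℕ) (a b : Fin h → ℕ+) (x y : Fin h → ℤ) : Finset (ℕ × ℤ × ℤ) :=
  Finset.univ.biUnion fun i : Fin h =>
    (plateauOf (a i) (b i) (x i) (y i)).image fun q => ((i : ℕ), q)

lemma mem_stack {h : ℕ} {a b : Fin h → ℕ+} {x y : Fin h → ℤ} {k : ℕ} {q : ℤ × ℤ} :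
    (k, q) ∈ stack h a b x y ↔
      ∃ hk : k < h, q ∈ plateauOf (a ⟨k, hk⟩) (b ⟨k, hk⟩) (x ⟨k, hk⟩) (y ⟨k, hk⟩) := by
  simp only [stack, Finset.mem_biUnion, Finset.mem_univ, true_and, Finset.mem_image, Prod.mk.injEq]
  constructor
  · rintro ⟨i, q', hq, rfl, rfl⟩
    exact ⟨i.isLt, hq⟩
  · rintro ⟨hk, hq⟩
    exact ⟨⟨k, hk⟩, q, hq, rfl, rfl⟩

lemma polySlice_stack {h : ℕ} (a b : Fin h → ℕ+) (x y : Fin h → ℤ) (i : Fin h) :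
    polySlice (stack h a b x y) i = plateauOf (a i) (b i) (x i) (y i) := by
  ext q
  rw [mem_polySlice, mem_stack]
  simp

lemma isPyramid_stack {h : ℕ} (hh : 1 ≤ h) {a b : Fin h → ℕ+} {x y : Fin h → ℤ}
    (hx : IntervalChain h a x) (hy : IntervalChain h b y) : IsPyramid h (stack h a b x y) := by
  have hx0 := hx.1 hh
  have hy0 := hy.1 hh
  refine ⟨fun k => ⟨?_, fun hk => ?_⟩, fun k hk => ?_, fun k u v huv => ?_, fun u v huv => ?_, ?_⟩
  · rintro ⟨q, hq⟩
    exact (mem_stack.1 (mem_polySlice.1 hq)).1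
  · rw [polySlice_stack a b x y ⟨k, hk⟩, ← Finset.card_pos, card_plateauOf]
    exact Nat.mul_pos (PNat.pos _) (PNat.pos _)
  · rw [polySlice_stack a b x y ⟨k, hk⟩]
    exact isPlateau_plateauOf _ _ _ _
  · obtain ⟨hk, hq⟩ := mem_stack.1 huv
    exact mem_stack.2 ⟨by omega, plateauOf_subset.2 ⟨hx.2 k hk, hy.2 k hk⟩ hq⟩
  · obtain ⟨hk, hq⟩ := mem_stack.1 huv
    rw [mem_plateauOf] at hq
    simp only at hq
    omega
  · refine mem_stack.2 ⟨hh, ?_⟩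
    have h1 := (a ⟨0, hh⟩).pos
    have h2 := (b ⟨0, hh⟩).pos
    rw [mem_plateauOf]
    simp only
    omega

lemma IsPyramid.exists_stack {h : ℕ} (hh : 1 ≤ h) {P : Finset (ℕ × ℤ × ℤ)} (hP : IsPyramid h P) :
    ∃ (a b : Fin h → ℕ+) (x y : Fin h → ℤ),
      IntervalChain h a x ∧ IntervalChain h b y ∧ stack h a b x y = P := by
  obtain ⟨hne, hpl, hdown, hpos, hzero⟩ := hP
  choose a b x y hS using fun i : Fin h => (hpl i i.isLt).exists_eq
  -- The ground plateau starts at the origin.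
  have h0 : x ⟨0, hh⟩ = 0 ∧ y ⟨0, hh⟩ = 0 := by
    have h1 := (a ⟨0, hh⟩).pos
    have h2 := (b ⟨0, hh⟩).pos
    have h3 := mem_polySlice.2 hzero
    have h4 := hpos (x ⟨0, hh⟩) (y ⟨0, hh⟩) (mem_polySlice.1 (by
      rw [hS ⟨0, hh⟩, mem_plateauOf]
      simp only
      omega))
    rw [hS ⟨0, hh⟩, mem_plateauOf] at h3
    simp only at h3
    omega
  have hnest : ∀ (k : ℕ) (hk : k + 1 < h),
      polySlice P (k + 1) ⊆ polySlice P k := fun k hk q hq =>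
    mem_polySlice.2 (hdown k q.1 q.2 (mem_polySlice.1 hq))
  have hstep := fun (k : ℕ) (hk : k + 1 < h) => plateauOf_subset.1
    (hS ⟨k + 1, hk⟩ ▸ hS ⟨k, by omega⟩ ▸ hnest k hk)
  refine ⟨a, b, x, y, ⟨fun _ => h0.1, fun k hk => (hstep k hk).1⟩,
    ⟨fun _ => h0.2, fun k hk => (hstep k hk).2⟩, ?_⟩
  ext ⟨k, q⟩
  rw [mem_stack]
  constructor
  · rintro ⟨hk, hq⟩
    rw [← hS ⟨k, hk⟩] at hq
    exact mem_polySlice.1 hq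
  · intro hq
    have hmem := mem_polySlice.2 hq
    have hk := (hne k).1 ⟨q, hmem⟩
    exact ⟨hk, hS ⟨k, hk⟩ ▸ hmem⟩

/-! ### Counting -/

/-- The admissible pairs of side-length tuples for the multivolume `m`. -/
def sidePairs (h : ℕ) (m : Fin h → ℕ+) : Set ((Fin h → ℕ+) × (Fin h → ℕ+)) :=
  {ab | Antitone ab.1 ∧ Antitone ab.2 ∧ ∀ i, ab.1 i * ab.2 i = m i}

lemma finite_sidePairs (h : ℕ) (m : Fin h → ℕ+) : (sidePairs h m).Finite := by
  refine ((Set.finite_Icc (1 : Fin h → ℕ+) m).prod (Set.finite_Icc (1 : Fin h → ℕ+) m)).subset ?_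
  rintro ⟨a, b⟩ ⟨-, -, hab⟩
  have key : ∀ c d : ℕ+, c ≤ c * d := fun c d => by
    rw [← PNat.coe_le_coe, PNat.mul_coe]
    exact Nat.le_mul_of_pos_right _ d.pos
  refine ⟨⟨fun i => one_le, fun i => ?_⟩, ⟨fun i => one_le, fun i => ?_⟩⟩
  · exact (key _ _).trans_eq (hab i)
  · exact (key _ _).trans_eq ((mul_comm _ _).trans (hab i))

/-- Side-length tuples of a pyramid of multivolume `m`, with the left endpoints of its two interval
chains. -/
abbrev PyramidData (h : ℕ) (m : Fin h → ℕ+) : Type :=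
  Σ ab : sidePairs h m, {x // IntervalChain h ab.1.1 x} × {y // IntervalChain h ab.1.2 y}

/-- The pyramid with the given side lengths and endpoints. -/
noncomputable def pyramidOfData (h : ℕ) (hh : 1 ≤ h) (m : Fin h → ℕ+) (D : PyramidData h m) :
    {P : Finset (ℕ × ℤ × ℤ) //
      IsPyramid h P ∧ ∀ i : Fin h, (polySlice P (i : ℕ)).card = (m i : ℕ)} :=
  ⟨stack h D.1.1.1 D.1.1.2 D.2.1.1 D.2.2.1, isPyramid_stack hh D.2.1.2 D.2.2.2, fun i => by
    rw [polySlice_stack, card_plateauOf, ← D.1.2.2.2 i, PNat.mul_coe]⟩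

lemma pyramidOfData_bijective (h : ℕ) (hh : 1 ≤ h) (m : Fin h → ℕ+) :
    Function.Bijective (pyramidOfData h hh m) := by
  constructor
  · rintro ⟨⟨⟨a, b⟩, hab⟩, ⟨x, hx⟩, ⟨y, hy⟩⟩ ⟨⟨⟨a', b'⟩, hab'⟩, ⟨x', hx'⟩, ⟨y', hy'⟩⟩ he
    have he' : stack h a b x y = stack h a' b' x' y' := congrArg Subtype.val he
    have key : ∀ i, a i = a' i ∧ b i = b' i ∧ x i = x' i ∧ y i = y' i := fun i => plateauOf_inj (by
      rw [← polySlice_stack, ← polySlice_stack, he'])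
    obtain rfl : a = a' := funext fun i => (key i).1
    obtain rfl : b = b' := funext fun i => (key i).2.1
    obtain rfl : x = x' := funext fun i => (key i).2.2.1
    obtain rfl : y = y' := funext fun i => (key i).2.2.2
    rfl
  · rintro ⟨P, hP, hm⟩
    obtain ⟨a, b, x, y, hx, hy, rfl⟩ := hP.exists_stack hh
    refine ⟨⟨⟨(a, b), hx.antitone, hy.antitone, fun i => ?_⟩, ⟨x, hx⟩, ⟨y, hy⟩⟩, rfl⟩
    rw [← PNat.coe_inj, PNat.mul_coe, ← hm i, polySlice_stack, card_plateauOf]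

theorem card_pyramids_multivolume (h : ℕ) (hh : 1 ≤ h) (m : Fin h → ℕ+) (hm : Antitone m) :
    Nat.card {P : Finset (ℕ × ℤ × ℤ) //
        IsPyramid h P ∧ ∀ i : Fin h, (polySlice P (i : ℕ)).card = (m i : ℕ)} =
    ∑ᶠ (ab : (Fin h → ℕ+) × (Fin h → ℕ+))
      (_ : Antitone ab.1 ∧ Antitone ab.2 ∧ ∀ i, ab.1 i * ab.2 i = m i),
      pyrWeight h ab.1 * pyrWeight h ab.2 := by
  rw [← Nat.card_congr (Equiv.ofBijective _ (pyramidOfData_bijective h hh m))]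
  have : Fintype (sidePairs h m) := (finite_sidePairs h m).fintype
  have hfin1 : ∀ ab : sidePairs h m, Finite {x // IntervalChain h ab.1.1 x} :=
    fun ab => finite_chains h _ ab.2.1
  have hfin2 : ∀ ab : sidePairs h m, Finite {x // IntervalChain h ab.1.2 x} :=
    fun ab => finite_chains h _ ab.2.2.1
  rw [Nat.card_sigma]
  have hsum := finsum_set_coe_eq_finsum_mem
    (f := fun ab : (Fin h → ℕ+) × (Fin h → ℕ+) => pyrWeight h ab.1 * pyrWeight h ab.2)
    (sidePairs h m)
  refine Eq.trans ?_ hsum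
  rw [finsum_eq_sum_of_fintype]
  refine Finset.sum_congr rfl fun ab _ => ?_
  rw [Nat.card_prod, card_chains h _ ab.2.1, card_chains h _ ab.2.2.1]
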